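/- Let G be a finitely presented group with finite generating set X. There exists a function α: ℕ → ℕ ∪ {0} such that f_{G,X}(k,m,n) ∼ α(n)/m (the right-hand side regarded as an element of 𝓕 independent of k) if and only if G is hyperbolic. -/

import Mathlib

open Function

namespace IsoSpecPaper

variable {ι : Type*} {G : Type*} [Group G]

/-- The (reduced) length of an element of a free group. -/
noncomputable def wnorm (w : FreeGroup ι) : ℕ :=
  @FreeGroup.norm ι (Classical.decEq ι) w

/-- `triv φ k` : the set of words of length at most `k` in the generators
(and their inverses) representing the identity of `G` under the marking `φ`. -/
noncomputable def triv (φ : FreeGroup ι →* G) (k : ℕ) : Set (FreeGroup ι) :=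
  {w | wnorm w ≤ k ∧ φ w = 1}

/-- `AreaLe R w l` : `w` is a product of `l` conjugates of elements of `R` or
their inverses in the free group. -/
def AreaLe (R : Set (FreeGroup ι)) (w : FreeGroup ι) (l : ℕ) : Prop :=
  ∃ L : List (FreeGroup ι × FreeGroup ι), L.length = l ∧
    (∀ p ∈ L, p.2 ∈ R ∨ p.2⁻¹ ∈ R) ∧
    w = (L.map fun p => p.1⁻¹ * p.2 * p.1).prod

/-- The area of `w` with respect to the set of relators `R`. -/
noncomputable def area (R : Set (FreeGroup ι)) (w : FreeGroup ι) : ℕ :=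
  sInf {l | AreaLe R w l}

/-- The isoperimetric spectrum of the marked group `(G, φ)`:
`isoSpec φ k m n = max { area_{S_m}(w) : w ∈ ⟪S_k⟫, ‖w‖ ≤ n }`. -/
noncomputable def isoSpec (φ : FreeGroup ι →* G) (k m n : ℕ) : ℕ :=
  sSup (area (triv φ m) '' {w | w ∈ Subgroup.normalClosure (triv φ k) ∧ wnorm w ≤ n})

/-- The real-valued isoperimetric spectrum. -/
noncomputable def isoSpecR (φ : FreeGroup ι →* G) : ℕ → ℕ → ℕ → ℝ :=
  fun k m n => (isoSpec φ k m n : ℝ)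

/-- The Dehn function of the presentation with relators `R`. -/
noncomputable def dehn (R : Set (FreeGroup ι)) (n : ℕ) : ℕ :=
  sSup (area R '' {w | w ∈ Subgroup.normalClosure R ∧ wnorm w ≤ n})

/-- The quasi-order `f ≼ g` on functions of triples `(k,m,n)` of positive integers
with `m ≥ k`. -/
def SpecLE (f g : ℕ → ℕ → ℕ → ℝ) : Prop :=
  ∃ C : ℕ, 0 < C ∧ ∀ k m n : ℕ, 0 < k → 0 < m → 0 < n → C * k ≤ m →
    f k (C * m) n ≤ C * g (C * k) m (C * n) + C * (n : ℝ) / m + C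

/-- Equivalence of isoperimetric functions: `f ∼ g`. -/
def SpecEquiv (f g : ℕ → ℕ → ℕ → ℝ) : Prop := SpecLE f g ∧ SpecLE g f

/-- The linear spectrum `(k,m,n) ↦ n/m`. -/
noncomputable def linSpec : ℕ → ℕ → ℕ → ℝ := fun _ m n => (n : ℝ) / m

/-- The word length of `g ∈ G` with respect to the marking `φ`. -/
noncomputable def wlen (φ : FreeGroup ι →* G) (g : G) : ℕ :=
  sInf {n | ∃ w : FreeGroup ι, wnorm w = n ∧ φ w = g}

/-- The word metric on `G` with respect to the marking `φ`. -/
noncomputable def wdist (φ : FreeGroup ι →* G) (g h : G) : ℕ := wlen φ (g⁻¹ * h)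

/-- Quasi-isometry of marked groups with respect to their word metrics. -/
noncomputable def QuasiIsometric {H : Type*} [Group H] {κ : Type*}
    (φ : FreeGroup ι →* G) (ψ : FreeGroup κ →* H) : Prop :=
  ∃ L : ℝ, 0 ≤ L ∧ ∃ (α : G → H) (β : H → G),
    (∀ x y : G, (wdist ψ (α x) (α y) : ℝ) ≤ L * wdist φ x y + L) ∧
    (∀ u v : H, (wdist φ (β u) (β v) : ℝ) ≤ L * wdist ψ u v + L) ∧
    (∀ t : H, (wdist ψ (α (β t)) t : ℝ) ≤ L) ∧
    (∀ s : G, (wdist φ (β (α s)) s : ℝ) ≤ L)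

/-- A (combinatorial) geodesic path of length `n` in the Cayley graph of `(G, φ)`:
consecutive vertices are at distance at most `1` and the endpoints are at
distance exactly `n`. -/
noncomputable def IsGeodesic (φ : FreeGroup ι →* G) {n : ℕ} (p : Fin (n + 1) → G) : Prop :=
  (∀ i : Fin n, wdist φ (p i.castSucc) (p i.succ) ≤ 1) ∧
  wdist φ (p 0) (p (Fin.last n)) = n

/-- Every vertex of the path `p` lies within distance `δ` of the set `A`. -/
noncomputable def ThinAt (φ : FreeGroup ι →* G) (δ : ℝ) {n : ℕ}
    (p : Fin (n + 1) → G) (A : Set G) : Prop :=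
  ∀ i, ∃ a ∈ A, (wdist φ (p i) a : ℝ) ≤ δ

/-- The Cayley graph of `(G, φ)` is `δ`-hyperbolic: every geodesic triangle is `δ`-thin. -/
noncomputable def HypConst (φ : FreeGroup ι →* G) (δ : ℝ) : Prop :=
  ∀ (n₁ n₂ n₃ : ℕ) (p : Fin (n₁ + 1) → G) (q : Fin (n₂ + 1) → G) (r : Fin (n₃ + 1) → G),
    IsGeodesic φ p → IsGeodesic φ q → IsGeodesic φ r →
    p (Fin.last n₁) = q 0 → q (Fin.last n₂) = r 0 → r (Fin.last n₃) = p 0 →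
    ThinAt φ δ p (Set.range q ∪ Set.range r) ∧
    ThinAt φ δ q (Set.range r ∪ Set.range p) ∧
    ThinAt φ δ r (Set.range p ∪ Set.range q)

/-- The marked group `(G, φ)` is hyperbolic. -/
noncomputable def IsHyperbolic (φ : FreeGroup ι →* G) : Prop :=
  ∃ δ : ℝ, 0 ≤ δ ∧ HypConst φ δ

/-- `G` (marked by `φ`) is a limit (direct limit) of hyperbolic groups. -/
noncomputable def LimitOfHyperbolic (φ : FreeGroup ι →* G) : Prop :=
  Surjective φ ∧ ∃ R : ℕ → Set (FreeGroup ι),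
    (∀ i j, i ≤ j → R i ⊆ R j) ∧
    φ.ker = Subgroup.normalClosure (⋃ i, R i) ∧
    ∀ i, IsHyperbolic (QuotientGroup.mk' (Subgroup.normalClosure (R i)))

/-- `G` (marked by `φ`) is well-approximated by hyperbolic groups. -/
noncomputable def WellApproximated (φ : FreeGroup ι →* G) : Prop :=
  Surjective φ ∧ ∃ R : ℕ → Set (FreeGroup ι),
    (∀ i j, i ≤ j → R i ⊆ R j) ∧
    φ.ker = Subgroup.normalClosure (⋃ i, R i) ∧
    (∀ i, IsHyperbolic (QuotientGroup.mk' (Subgroup.normalClosure (R i)))) ∧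
    ∃ C : ℕ, 0 < C ∧ ∀ i : ℕ, 0 < i →
      (∀ w : FreeGroup ι, wnorm w ≤ i → φ w = 1 →
        w ∈ Subgroup.normalClosure (R i)) ∧
      HypConst (QuotientGroup.mk' (Subgroup.normalClosure (R i))) ((C * i : ℕ) : ℝ)

/-! ### Abstract geodesic metric lemmas -/

/-- `p` restricted to `[0,n]` is a geodesic. -/
def IsGeo {V : Type*} (d : V → V → ℕ) (p : ℕ → V) (n : ℕ) : Prop :=
  ∀ i j, i ≤ j → j ≤ n → d (p i) (p j) + i = j

/-- A discrete geodesic (pseudo)metric. -/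
structure GeoMet {V : Type*} (d : V → V → ℕ) : Prop where
  refl : ∀ x, d x x = 0
  symm : ∀ x y, d x y = d y x
  tri : ∀ x y z, d x z ≤ d x y + d y z
  geo : ∀ x y, ∃ p : ℕ → V, p 0 = x ∧ p (d x y) = y ∧ IsGeo d p (d x y)

/-- Geodesic triangles are thin. -/
def Thin {V : Type*} (d : V → V → ℕ) (δ : ℕ) : Prop :=
  ∀ (p q r : ℕ → V) (n₁ n₂ n₃ : ℕ), IsGeo d p n₁ → IsGeo d q n₂ → IsGeo d r n₃ →
    p n₁ = q 0 → q n₂ = r 0 → r n₃ = p 0 →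
    ∀ i ≤ n₁, (∃ j ≤ n₂, d (p i) (q j) ≤ δ) ∨ (∃ j ≤ n₃, d (p i) (r j) ≤ δ)

lemma switch (A B : ℕ → Prop) (n : ℕ) (hA : A 0) (hB : B n) (h : ∀ i ≤ n, A i ∨ B i) :
    ∃ i i', i' ≤ i ∧ i ≤ i' + 1 ∧ i ≤ n ∧ A i' ∧ B i := by
  classical
  have hex : ∃ i, B i := ⟨n, hB⟩
  have h1 := Nat.find_spec hex
  have h2 := Nat.find_min' hex hB
  by_cases h0 : Nat.find hex = 0
  · exact ⟨Nat.find hex, 0, by omega, by omega, h2, hA, h1⟩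
  · refine ⟨Nat.find hex, Nat.find hex - 1, by omega, by omega, h2, ?_, h1⟩
    have h3 : ¬ B (Nat.find hex - 1) := Nat.find_min hex (by omega)
    exact (h _ (by omega)).resolve_right h3

lemma IsGeo.reverse {V : Type*} {d : V → V → ℕ} (M : GeoMet d) {p : ℕ → V} {n : ℕ}
    (h : IsGeo d p n) : IsGeo d (fun i => p (n - i)) n := by
  intro i j hij hj
  have := h (n - j) (n - i) (by omega) (by omega)
  have h2 := M.symm (p (n - i)) (p (n - j))
  try simp only
  omega

lemma near_of_thin {V : Type*} {d : V → V → ℕ} (M : GeoMet d) {δ : ℕ} (T : Thin d δ)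
    (w : V) (p : ℕ → V) (n : ℕ) (hp : IsGeo d p n) :
    ∃ i ≤ n, 2 * d w (p i) + n ≤ d (p 0) w + d (p n) w + 4 * δ + 2 := by
  obtain ⟨q, q0, q1, hq⟩ := M.geo (p n) w
  obtain ⟨r, r0, r1, hr⟩ := M.geo w (p 0)
  have hT := T p q r _ _ _ hp hq hr q0.symm (by rw [q1, r0]) r1
  obtain ⟨i, i', h1, h2, h3, ⟨j, hj, hj'⟩, ⟨k, hk, hk'⟩⟩ :=
    switch (fun i => ∃ j ≤ d w (p 0), d (p i) (r j) ≤ δ)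
      (fun i => ∃ j ≤ d (p n) w, d (p i) (q j) ≤ δ) n
      ⟨_, le_rfl, by (try simp only); rw [r1, M.refl]; omega⟩
      ⟨0, by omega, by (try simp only); rw [q0, M.refl]; omega⟩ (fun i hi => (hT i hi).symm)
  refine ⟨i, h3, ?_⟩
  have a1 := hr 0 j (by omega) hj
  have a2 := hr j _ hj le_rfl
  have b1 := hq 0 k (by omega) hk
  have b2 := hq k _ hk le_rfl
  rw [r0] at a1; rw [r1] at a2; rw [q0] at b1; rw [q1] at b2
  have c1 := hp 0 i' (by omega) (by omega)
  have c2 := hp i n (by omega) (by omega)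
  have c3 := hp i' i (by omega) (by omega)
  have t1 := M.tri (p 0) (r j) (p i')
  have t2 := M.tri w (r j) (p i')
  have t3 := M.tri (p n) (q k) (p i)
  have t4 := M.tri w (q k) (p i)
  have t5 := M.tri w (p i') (p i)
  have s1 := M.symm (p i') (r j)
  have s2 := M.symm (p i) (q k)
  have s3 := M.symm (r j) (p 0)
  have s4 := M.symm (q k) w
  have s5 := M.symm (p i) (p n)
  have s6 := M.symm w (p 0)
  omega

lemma four_point {V : Type*} {d : V → V → ℕ} (M : GeoMet d) {δ : ℕ} (T : Thin d δ)
    (x y z w : V) :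
    d x z + d y w ≤ d x y + d z w + 6 * δ + 2 ∨ d x z + d y w ≤ d y z + d x w + 6 * δ + 2 := by
  obtain ⟨p, p0, p1, hp⟩ := M.geo x z
  obtain ⟨q, q0, q1, hq⟩ := M.geo z y
  obtain ⟨r, r0, r1, hr⟩ := M.geo y x
  obtain ⟨i, hi, hi'⟩ := near_of_thin M T w p _ hp
  rw [p0, p1] at hi'
  rcases T p q r _ _ _ hp hq hr (by rw [p1, q0]) (by rw [q1, r0]) (by rw [r1, p0]) i hi with
    ⟨j, hj, hj'⟩ | ⟨j, hj, hj'⟩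
  · right
    have b1 := hq 0 j (by omega) hj
    have b2 := hq j _ hj le_rfl
    rw [q0] at b1; rw [q1] at b2
    have t1 := M.tri w (p i) (q j)
    have t2 := M.tri z (q j) w
    have t3 := M.tri y (q j) w
    have s1 := M.symm w (q j)
    have s2 := M.symm y (q j)
    have s3 := M.symm y z
    omega
  · left
    have b1 := hr 0 j (by omega) hj
    have b2 := hr j _ hj le_rfl
    rw [r0] at b1; rw [r1] at b2
    have t1 := M.tri w (p i) (r j)
    have t2 := M.tri x (r j) w
    have t3 := M.tri y (r j) w
    have s1 := M.symm w (r j)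
    have s2 := M.symm x (r j)
    have s3 := M.symm x y
    omega

/-- Linear growth of chains satisfying local straightness. -/
lemma chain_growth {V : Type*} {d : V → V → ℕ} {E : ℕ} (M : GeoMet d)
    (F : ∀ x y z w, d x z + d y w ≤ d x y + d z w + E ∨ d x z + d y w ≤ d y z + d x w + E)
    (x : ℕ → V) (N m : ℕ) (hm : 0 < m) (hE : E ≤ m)
    (h1 : ∀ i < N, d (x i) (x (i + 1)) ≤ 3 * m)
    (h2 : ∀ i < N, 3 * m ≤ d (x i) (x (i + 1)) + m)
    (h3 : ∀ i, i + 2 ≤ N → 6 * m ≤ d (x i) (x (i + 2)) + m) :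
    ∀ i < N, d (x 0) (x i) + m ≤ d (x 0) (x (i + 1)) := by
  intro i
  induction i with
  | zero => intro h; have := h2 0 h; rw [M.refl]; omega
  | succ i ih =>
    intro h
    have a := ih (by omega)
    have b := h1 i (by omega)
    have c := h1 (i + 1) h
    have e := h3 i (by omega)
    have s1 := M.symm (x i) (x 0)
    have s2 := M.symm (x (i + 2)) (x (i + 1))
    have e2 : i + 1 + 1 = i + 2 := rfl
    rw [e2] at c ⊢
    rcases F (x i) (x 0) (x (i + 2)) (x (i + 1)) with f | f <;> omega

/-! ### Rectangle inequality implies thin triangles -/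

/-- A discrete path. -/
def IsPath {V : Type*} (d : V → V → ℕ) (p : ℕ → V) (n : ℕ) : Prop :=
  ∀ i < n, d (p i) (p (i + 1)) ≤ 1

/-- The rectangle inequality. -/
def Rect {V : Type*} (d : V → V → ℕ) (K : ℕ) : Prop :=
  ∀ (p₁ p₂ p₃ p₄ : ℕ → V) (n₁ n₂ n₃ n₄ D₁ D₂ : ℕ),
    IsPath d p₁ n₁ → IsPath d p₂ n₂ → IsPath d p₃ n₃ → IsPath d p₄ n₄ →
    p₁ n₁ = p₂ 0 → p₂ n₂ = p₃ 0 → p₃ n₃ = p₄ 0 → p₄ n₄ = p₁ 0 →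
    (∀ i ≤ n₁, ∀ j ≤ n₃, D₁ ≤ d (p₁ i) (p₃ j)) →
    (∀ i ≤ n₂, ∀ j ≤ n₄, D₂ ≤ d (p₂ i) (p₄ j)) →
    D₁ * D₂ ≤ K * (n₁ + n₂ + n₃ + n₄) + K

/-- There is a path of length `n` from `x` to `y` all of whose vertices satisfy `P`. -/
def Reach {V : Type*} (d : V → V → ℕ) (P : V → Prop) (x y : V) (n : ℕ) : Prop :=
  ∃ p : ℕ → V, p 0 = x ∧ p n = y ∧ IsPath d p n ∧ ∀ i ≤ n, P (p i)

lemma IsGeo.isPath {V : Type*} {d : V → V → ℕ} {p : ℕ → V} {n : ℕ}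
    (h : IsGeo d p n) : IsPath d p n := by
  intro i hi
  have := h i (i + 1) (by omega) (by omega)
  omega

lemma IsPath.reverse {V : Type*} {d : V → V → ℕ} (M : GeoMet d) {p : ℕ → V} {n : ℕ}
    (h : IsPath d p n) : IsPath d (fun i => p (n - i)) n := by
  intro i hi
  have := h (n - (i + 1)) (by omega)
  have e : n - (i + 1) + 1 = n - i := by omega
  rw [e, M.symm] at this
  exact this

lemma IsPath.shift {V : Type*} {d : V → V → ℕ} {p : ℕ → V} {n : ℕ}
    (h : IsPath d p n) (a b : ℕ) (hab : a + b ≤ n) : IsPath d (fun i => p (a + i)) b := by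
  intro i hi
  exact h (a + i) (by omega)

lemma IsPath.le {V : Type*} {d : V → V → ℕ} (M : GeoMet d) {p : ℕ → V} {n : ℕ}
    (h : IsPath d p n) : ∀ i j, i ≤ j → j ≤ n → d (p i) (p j) + i ≤ j := by
  intro i j hij
  induction j, hij using Nat.le_induction with
  | base => intro _; rw [M.refl]; omega
  | succ j hij ih =>
    intro hj
    have a := ih (by omega)
    have b := h j (by omega)
    have := M.tri (p i) (p j) (p (j + 1))
    omega

lemma Reach.symm {V : Type*} {d : V → V → ℕ} (M : GeoMet d) {P : V → Prop} {x y : V} {n : ℕ}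
    (h : Reach d P x y n) : Reach d P y x n := by
  obtain ⟨p, p0, p1, hp, hP⟩ := h
  exact ⟨fun i => p (n - i), by simpa using p1, by simpa using p0, hp.reverse M,
    fun i hi => hP _ (by omega)⟩

lemma Reach.trans {V : Type*} {d : V → V → ℕ} {P : V → Prop} {x y z : V} {m n : ℕ}
    (h : Reach d P x y m) (h' : Reach d P y z n) : Reach d P x z (m + n) := by
  obtain ⟨p, p0, p1, hp, hP⟩ := h
  obtain ⟨q, q0, q1, hq, hQ⟩ := h'
  refine ⟨fun i => if i ≤ m then p i else q (i - m), by simp [p0], ?_, ?_, ?_⟩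
  · by_cases hn : n = 0
    · subst hn; simp [p1, ← q1, q0]
    · have : ¬ (m + n ≤ m) := by omega
      simp [this, q1]
  · intro i hi
    try simp only
    by_cases h1 : i + 1 ≤ m
    · rw [if_pos (by omega), if_pos h1]; exact hp i (by omega)
    · by_cases h2 : i ≤ m
      · have e : i = m := by omega
        subst e
        rw [if_pos h2, if_neg h1, p1, ← q0]
        have := hq 0 (by omega)
        rwa [show i + 1 - i = 0 + 1 by omega]
      · rw [if_neg h2, if_neg h1, show i + 1 - m = (i - m) + 1 by omega]
        exact hq _ (by omega)
  · intro i hi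
    try simp only
    split_ifs with h1
    · exact hP i h1
    · exact hQ _ (by omega)

/-- Geodesics stay in the `√ℓ`-neighbourhood of paths with the same endpoints. -/
lemma geo_near_path {V : Type*} {d : V → V → ℕ} (M : GeoMet d) {K : ℕ} (R : Rect d K)
    (σ τ : ℕ → V) (N ℓ k s : ℕ) (hσ : IsGeo d σ N) (hτ : IsPath d τ ℓ)
    (h0 : τ 0 = σ 0) (h1 : τ ℓ = σ N) (hk : k ≤ N) (hs : 1 ≤ s)
    (hd : ∀ j ≤ ℓ, 4 * s ≤ d (σ k) (τ j)) : s * (2 * s) ≤ K * (3 * ℓ) + K := by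
  classical
  have hσ' : ∀ i j, i ≤ j → j ≤ N → d (σ j) (σ i) + i = j := by
    intro i j a b; rw [M.symm]; exact hσ i j a b
  have hk1 : 4 * s ≤ k := by
    have := hd 0 (by omega)
    rw [h0] at this
    have := hσ' 0 k (by omega) hk
    omega
  have hk2 : k + 4 * s ≤ N := by
    have := hd ℓ le_rfl
    rw [h1] at this
    have := hσ k N hk le_rfl
    omega
  have hNl : N ≤ ℓ := by
    have a := hτ.le M 0 ℓ (by omega) le_rfl
    rw [h0, h1] at a
    have := hσ 0 N (by omega) le_rfl
    omega
  let Lf : ℕ → Prop := fun j => ∃ i, i + 2 * s ≤ k ∧ d (σ i) (τ j) ≤ s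
  let Rt : ℕ → Prop := fun j => ∃ i, k + 2 * s ≤ i ∧ i ≤ N ∧ d (σ i) (τ j) ≤ s
  have hL0 : Lf 0 := ⟨0, by omega, by rw [h0, M.refl]; omega⟩
  have hR1 : Rt ℓ := ⟨N, by omega, le_rfl, by rw [h1, M.refl]; omega⟩
  have hnot : ∀ j j', j ≤ ℓ → j' ≤ ℓ → j ≤ j' + 1 → j' ≤ j + 1 → Lf j → ¬ Rt j' := by
    rintro j j' hj hj' e1 e2 ⟨i, a1, a2⟩ ⟨i', b1, b2, b3⟩
    have c1 := hσ i i' (by omega) b2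
    have c2 := M.tri (σ i) (τ j) (σ i')
    have c3 := M.tri (τ j) (τ j') (σ i')
    have c4 := M.symm (τ j') (σ i')
    have c5 : d (τ j) (τ j') ≤ 1 := by
      rcases le_total j j' with h | h
      · have := hτ.le M j j' h hj'; omega
      · have := hτ.le M j' j h hj; rw [M.symm]; omega
    omega
  -- last left index
  have hL1 := Nat.findGreatest_spec (P := Lf) (Nat.zero_le ℓ) hL0
  have hL2 : Nat.findGreatest Lf ℓ ≤ ℓ := Nat.findGreatest_le ℓ
  have hL3 : ∀ j, Nat.findGreatest Lf ℓ < j → j ≤ ℓ → ¬ Lf j :=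
    fun j a b => Nat.findGreatest_is_greatest a b
  generalize Nat.findGreatest Lf ℓ = j₁ at hL1 hL2 hL3
  have hj1 : j₁ < ℓ := by
    rcases Nat.lt_or_ge j₁ ℓ with h | h
    · exact h
    · exact absurd hR1 (hnot j₁ ℓ hL2 le_rfl (by omega) (by omega) hL1)
  have hex : ∃ j, j₁ < j ∧ Rt j := ⟨ℓ, hj1, hR1⟩
  have hR2 := Nat.find_spec hex
  have hR3 : Nat.find hex ≤ ℓ := Nat.find_min' hex ⟨hj1, hR1⟩
  have hR4 : ∀ j, j₁ < j → j < Nat.find hex → ¬ Rt j :=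
    fun j a b c => Nat.find_min hex b ⟨a, c⟩
  generalize Nat.find hex = j₂ at hR2 hR3 hR4
  obtain ⟨hj12, hR5⟩ := hR2
  have hj12' : j₁ + 1 < j₂ := by
    rcases Nat.lt_or_ge (j₁ + 1) j₂ with h | h
    · exact h
    · exact absurd hR5 (hnot j₁ j₂ hL2 hR3 (by omega) (by omega) hL1)
  have hmid : ∀ i ≤ N, ∀ j, j₁ < j → j < j₂ → s + 1 ≤ d (σ i) (τ j) := by
    intro i hi j ha hb
    by_contra hcon
    by_cases c1 : i + 2 * s ≤ k
    · exact hL3 j ha (by omega) ⟨i, c1, by omega⟩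
    · by_cases c2 : k + 2 * s ≤ i
      · exact hR4 j ha hb ⟨i, c2, hi, by omega⟩
      · have e1 := hd j (by omega)
        have e2 := M.tri (σ k) (σ i) (τ j)
        rcases le_total k i with h | h
        · have := hσ k i h hi; omega
        · have := hσ' i k h hk; omega
  have hall : ∀ i ≤ N, ∀ j, j₁ ≤ j → j ≤ j₂ → s ≤ d (σ i) (τ j) := by
    intro i hi j ha hb
    rcases Nat.eq_or_lt_of_le ha with h | h
    · subst h
      have e1 := hmid i hi (j₁ + 1) (by omega) (by omega)
      have e2 := hτ j₁ (by omega)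
      have := M.tri (σ i) (τ j₁) (τ (j₁ + 1))
      omega
    · rcases Nat.eq_or_lt_of_le hb with h' | h'
      · have e1 := hmid i hi (j - 1) (by omega) (by omega)
        have e2 := hτ (j - 1) (by omega)
        have e3 : j - 1 + 1 = j := by omega
        rw [e3] at e2
        have e4 := M.tri (σ i) (τ j) (τ (j - 1))
        have e5 := M.symm (τ j) (τ (j - 1))
        omega
      · have := hmid i hi j h h'; omega
  obtain ⟨i₁, a1, a2⟩ := hL1
  obtain ⟨i₂, b1, b2, b3⟩ := hR5
  obtain ⟨g, g0, g1, hg⟩ := M.geo (σ i₂) (τ j₂)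
  obtain ⟨f, f0, f1, hf⟩ := M.geo (τ j₁) (σ i₁)
  have c1 := hσ i₁ i₂ (by omega) b2
  have c2 := M.tri (σ i₁) (τ j₁) (σ i₂)
  have c3 := M.tri (τ j₁) (τ j₂) (σ i₂)
  have c4 := hτ.le M j₁ j₂ (by omega) hR3
  have c5 := M.symm (σ i₂) (τ j₂)
  have c6 := M.symm (σ i₁) (τ j₁)
  have key := R (fun i => σ (i₁ + i)) g (fun i => τ (j₁ + (j₂ - j₁ - i))) f
    (i₂ - i₁) (d (σ i₂) (τ j₂)) (j₂ - j₁) (d (τ j₁) (σ i₁)) s (2 * s)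
    (hσ.isPath.shift _ _ (by omega)) hg.isPath
    ((hτ.shift j₁ (j₂ - j₁) (by omega)).reverse M) hf.isPath
    (by (try simp only); rw [g0]; congr 1; omega)
    (by (try simp only); rw [g1]; congr 1; omega)
    (by (try simp only); rw [f0]; congr 1; omega)
    (by (try simp only); rw [f1]; congr 1)
    (by
      intro i hi j hj
      exact hall _ (by omega) _ (by omega) (by omega))
    (by
      intro i hi j hj
      have e1 := hg 0 i (by omega) hi
      have e2 := hf j _ hj le_rfl
      rw [g0] at e1
      rw [f1] at e2
      have t1 := M.tri (σ i₁) (f j) (σ i₂)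
      have t2 := M.tri (f j) (g i) (σ i₂)
      have s1 := M.symm (σ i₁) (f j)
      have s2 := M.symm (f j) (g i)
      have s3 := M.symm (g i) (σ i₂)
      omega)
  refine key.trans ?_
  gcongr
  omega

/-- Morse lemma for `3`-quasi-geodesic paths. -/
lemma morse {V : Type*} {d : V → V → ℕ} (M : GeoMet d) {K : ℕ} (R : Rect d K)
    (σ τ : ℕ → V) (N ℓ : ℕ) (hσ : IsGeo d σ N) (hτ : IsPath d τ ℓ)
    (hq : ∀ i j, i ≤ j → j ≤ ℓ → j ≤ 3 * d (τ i) (τ j) + i)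
    (h0 : τ 0 = σ 0) (h1 : τ ℓ = σ N) :
    ∀ k ≤ N, ∃ j ≤ ℓ, d (σ k) (τ j) ≤ 2000 * K + 100 := by
  classical
  have hmin : ∀ k, ∃ j, j ≤ ℓ ∧ ∀ j' ≤ ℓ, d (σ k) (τ j) ≤ d (σ k) (τ j') := by
    intro k
    obtain ⟨j, hj, h⟩ := Finset.exists_min_image (Finset.range (ℓ + 1))
      (fun j => d (σ k) (τ j)) ⟨0, by simp⟩
    refine ⟨j, by simpa [Nat.lt_succ_iff] using hj, fun j' hj' => h j' ?_⟩
    simp; omega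
  choose pr hpr1 hpr2 using hmin
  obtain ⟨k, hk, hmax⟩ := Finset.exists_max_image (Finset.range (N + 1))
      (fun k => d (σ k) (τ (pr k))) ⟨0, by simp⟩
  have hk : k ≤ N := by simpa [Nat.lt_succ_iff] using hk
  have hmax : ∀ k' ≤ N, d (σ k') (τ (pr k')) ≤ d (σ k) (τ (pr k)) := by
    intro k' hk'
    apply hmax
    simp; omega
  have hge : ∀ j ≤ ℓ, d (σ k) (τ (pr k)) ≤ d (σ k) (τ j) := hpr2 k
  generalize d (σ k) (τ (pr k)) = D at hmax hge
  suffices hD : D ≤ 2000 * K + 100 by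
    intro k' hk'
    exact ⟨pr k', hpr1 k', (hmax k' hk').trans hD⟩
  by_contra hbig
  have hsymm := M.symm
  -- left end
  have hleft : ∃ a ja n, a ≤ k ∧ k ≤ a + 2 * D ∧ ja ≤ ℓ ∧ d (σ a) (τ ja) ≤ D ∧ n ≤ D ∧
      Reach d (fun v => D ≤ d (σ k) v) (σ a) (τ ja) n := by
    by_cases hc : k ≤ 2 * D
    · refine ⟨0, 0, 0, by omega, by omega, by omega, by rw [h0, M.refl]; omega, by omega, ?_⟩
      refine ⟨fun _ => σ 0, rfl, h0.symm, by intro i hi; omega, ?_⟩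
      intro i hi
      try simp only
      rw [← h0]
      exact hge 0 (by omega)
    · obtain ⟨g, g0, g1, hg⟩ := M.geo (σ (k - 2 * D)) (τ (pr (k - 2 * D)))
      have hle := hmax (k - 2 * D) (by omega)
      refine ⟨k - 2 * D, pr (k - 2 * D), _, by omega, by omega, hpr1 _, hle,
        hle, g, g0, g1, hg.isPath, ?_⟩
      intro i hi
      have e1 := hg 0 i (by omega) hi
      rw [g0] at e1
      have e2 := hσ (k - 2 * D) k (by omega) hk
      have e3 := M.tri (σ (k - 2 * D)) (g i) (σ k)
      have e4 := M.symm (g i) (σ k)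
      omega
  have hright : ∃ b jb n, k ≤ b ∧ b ≤ k + 2 * D ∧ b ≤ N ∧ jb ≤ ℓ ∧ d (σ b) (τ jb) ≤ D ∧ n ≤ D ∧
      Reach d (fun v => D ≤ d (σ k) v) (σ b) (τ jb) n := by
    by_cases hc : N ≤ k + 2 * D
    · refine ⟨N, ℓ, 0, by omega, by omega, by omega, by omega, by rw [h1, M.refl]; omega,
        by omega, ?_⟩
      refine ⟨fun _ => σ N, rfl, h1.symm, by intro i hi; omega, ?_⟩
      intro i hi
      try simp only
      rw [← h1]
      exact hge ℓ (by omega)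
    · obtain ⟨g, g0, g1, hg⟩ := M.geo (σ (k + 2 * D)) (τ (pr (k + 2 * D)))
      have hle := hmax (k + 2 * D) (by omega)
      refine ⟨k + 2 * D, pr (k + 2 * D), _, by omega, by omega, by omega, hpr1 _, hle,
        hle, g, g0, g1, hg.isPath, ?_⟩
      intro i hi
      have e1 := hg 0 i (by omega) hi
      rw [g0] at e1
      have e2 := hσ k (k + 2 * D) (by omega) (by omega)
      have e3 := M.tri (σ k) (g i) (σ (k + 2 * D))
      have e4 := M.symm (g i) (σ (k + 2 * D))
      omega
  obtain ⟨a, ja, na, ha1, ha2, ha3, ha4, ha5, hra⟩ := hleft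
  obtain ⟨b, jb, nb, hb1, hb2, hb3, hb4, hb5, hb6, hrb⟩ := hright
  have hab : d (σ a) (σ b) ≤ 4 * D := by
    have := hσ a b (by omega) (by omega); omega
  have hjj : d (τ ja) (τ jb) ≤ 6 * D := by
    have t1 := M.tri (τ ja) (σ a) (τ jb)
    have t2 := M.tri (σ a) (σ b) (τ jb)
    have s1 := M.symm (τ ja) (σ a)
    omega
  have hseg : ∀ i j, i ≤ j → j ≤ ℓ →
      Reach d (fun v => D ≤ d (σ k) v) (τ i) (τ j) (j - i) := by
    intro i j hij hj
    refine ⟨fun t => τ (i + t), rfl, by (try simp only); congr 1; omega,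
      hτ.shift _ _ (by omega), fun t ht => hge _ (by omega)⟩
  have hmid : ∃ n, n ≤ 18 * D ∧ Reach d (fun v => D ≤ d (σ k) v) (τ ja) (τ jb) n := by
    rcases le_total ja jb with h | h
    · refine ⟨_, ?_, hseg ja jb h hb4⟩
      have := hq ja jb h hb4
      omega
    · refine ⟨_, ?_, (hseg jb ja h ha3).symm M⟩
      have := hq jb ja h ha3
      have := M.symm (τ ja) (τ jb)
      omega
  obtain ⟨nm, hnm, hrm⟩ := hmid
  obtain ⟨t, t0, t1, ht, htP⟩ := (hra.trans hrm).trans (hrb.symm M)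
  have hs4 : 4 * (D / 4) ≤ D := by omega
  have key := geo_near_path M R (fun i => σ (a + i)) t (b - a) (na + nm + nb) (k - a) (D / 4)
    (by
      intro i j hij hj
      have := hσ (a + i) (a + j) (by omega) (by omega)
      (try simp only); omega)
    ht (by simpa using t0) (by (try simp only); rw [t1]; congr 1; omega) (by omega) (by omega)
    (by
      intro j hj
      have := htP j hj
      try simp only
      rw [show a + (k - a) = k by omega]
      omega)
  have hlen : na + nm + nb ≤ 20 * D := by omega
  have hD4 : D ≤ 4 * (D / 4) + 3 := by omega
  have hs25 : 25 ≤ D / 4 := by omega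
  have hsK : 500 * K ≤ D / 4 := by omega
  generalize D / 4 = s at *
  have key2 : s * (2 * s) ≤ K * (3 * (20 * (4 * s + 3))) + K := by
    refine key.trans ?_
    gcongr
    omega
  have : K * (3 * (20 * (4 * s + 3))) + K ≤ K * (250 * s) := by nlinarith
  have h3 : 500 * K * s ≤ s * s := Nat.mul_le_mul_right _ hsK
  have : 0 < s * s := by positivity
  nlinarith

/-- An `L`-shaped path and a geodesic with the same endpoints are close. -/
lemma ell_shape {V : Type*} {d : V → V → ℕ} (M : GeoMet d) {K : ℕ} (R : Rect d K)
    (σ h g : ℕ → V) (N A B : ℕ) (hσ : IsGeo d σ N) (hh : IsGeo d h A) (hg : IsGeo d g B)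
    (h0 : h 0 = σ 0) (h1 : h A = g 0) (h2 : g B = σ N)
    (hpr : ∀ i ≤ A, B ≤ d (h i) (g B)) :
    (∀ k ≤ N, (∃ i ≤ A, d (σ k) (h i) ≤ 2000 * K + 100) ∨
      (∃ j ≤ B, d (σ k) (g j) ≤ 2000 * K + 100)) ∧
    (∀ j ≤ B, ∃ k ≤ N, d (g j) (σ k) ≤ 7 * (2000 * K + 100) + 3) := by
  have hx : ∀ i ≤ A, ∀ j ≤ B, (A - i) + j ≤ 3 * d (h i) (g j) := by
    intro i hi j hj
    have a1 := hpr i hi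
    have a2 := hg j B hj le_rfl
    have a3 := hg 0 j (by omega) hj
    have a4 := hh i A hi le_rfl
    rw [h1] at a4
    have t1 := M.tri (h i) (g j) (g B)
    have t2 := M.tri (h i) (g j) (g 0)
    have s1 := M.symm (g j) (g 0)
    omega
  obtain ⟨τ, hτ⟩ : ∃ τ : ℕ → V, ∀ i, τ i = if i ≤ A then h i else g (i - A) := ⟨_, fun _ => rfl⟩
  have τh : ∀ i ≤ A, τ i = h i := fun i hi => by rw [hτ, if_pos hi]
  have τg : ∀ j, τ (A + j) = g j := by
    intro j
    by_cases hj : j = 0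
    · subst hj; rw [Nat.add_zero, τh A le_rfl, h1]
    · rw [hτ, if_neg (by omega)]; congr 1; omega
  have hpath : IsPath d τ (A + B) := by
    intro i hi
    by_cases hc : i + 1 ≤ A
    · rw [τh _ hc, τh _ (by omega)]; exact hh.isPath i (by omega)
    · have e := hg.isPath (i - A) (by omega)
      rw [← τg, ← τg] at e
      rwa [show A + (i - A) = i by omega, show A + (i - A + 1) = i + 1 by omega] at e
  have hq : ∀ i j, i ≤ j → j ≤ A + B → j ≤ 3 * d (τ i) (τ j) + i := by
    intro i j hij hj
    by_cases c1 : j ≤ A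
    · rw [τh _ c1, τh _ (by omega)]
      have := hh i j hij c1; omega
    · obtain ⟨j', rfl⟩ : ∃ j', j = A + j' := ⟨j - A, by omega⟩
      rw [τg]
      by_cases c2 : i ≤ A
      · rw [τh _ c2]
        have := hx i c2 j' (by omega); omega
      · obtain ⟨i', rfl⟩ : ∃ i', i = A + i' := ⟨i - A, by omega⟩
        rw [τg]
        have := hg i' j' (by omega) (by omega); omega
  have τ0 : τ 0 = σ 0 := by rw [τh _ (by omega), h0]
  have τ1 : τ (A + B) = σ N := by rw [τg, h2]
  have key := morse M R σ τ N (A + B) hσ hpath hq τ0 τ1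
  generalize 2000 * K + 100 = D at key ⊢
  constructor
  · intro k hk
    obtain ⟨j, hj, hd⟩ := key k hk
    by_cases c : j ≤ A
    · left; exact ⟨j, c, by rwa [τh _ c] at hd⟩
    · right
      refine ⟨j - A, by omega, ?_⟩
      rw [← τg, show A + (j - A) = j by omega]; exact hd
  · intro j hj
    obtain ⟨i, i', e1, e2, e3, ⟨x, hx1, hx2⟩, ⟨y, hy1, hy2, hy3⟩⟩ :=
      switch (fun k => ∃ x ≤ A + j, d (σ k) (τ x) ≤ D)
        (fun k => ∃ y, A + j ≤ y ∧ y ≤ A + B ∧ d (σ k) (τ y) ≤ D) N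
        ⟨0, by omega, by (try simp only); rw [τ0, M.refl]; omega⟩
        ⟨A + B, by omega, le_rfl, by (try simp only); rw [τ1, M.refl]; omega⟩
        (by
          intro k hk
          obtain ⟨z, hz, hd⟩ := key k hk
          rcases le_total z (A + j) with c | c
          · left; exact ⟨z, c, hd⟩
          · right; exact ⟨z, c, hz, hd⟩)
    refine ⟨i', by omega, ?_⟩
    have f1 := hσ i' i e1 e3
    have f2 := hq x y (by omega) hy2
    have f3 := hpath.le M x (A + j) hx1 (by omega)
    rw [τg] at f3
    have t1 := M.tri (τ x) (σ i') (τ y)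
    have t2 := M.tri (σ i') (σ i) (τ y)
    have t3 := M.tri (g j) (τ x) (σ i')
    have s1 := M.symm (τ x) (σ i')
    have s2 := M.symm (g j) (τ x)
    omega

lemma thin_of_rect {V : Type*} {d : V → V → ℕ} (M : GeoMet d) {K : ℕ} (R : Rect d K) :
    Thin d (8 * (2000 * K + 100) + 3) := by
  intro p q r n₁ n₂ n₃ hp hq hr e1 e2 e3 i hi
  obtain ⟨j₀, hj₀, hmin⟩ := Finset.exists_min_image (Finset.range (n₃ + 1))
      (fun j => d (r j) (p n₁)) ⟨0, by simp⟩
  have hj₀ : j₀ ≤ n₃ := by simpa [Nat.lt_succ_iff] using hj₀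
  have hmin : ∀ j ≤ n₃, d (r j₀) (p n₁) ≤ d (r j) (p n₁) := by
    intro j hj
    apply hmin
    simp; omega
  obtain ⟨g, g0, g1, hg⟩ := M.geo (r j₀) (p n₁)
  have E1 := (ell_shape M R p (fun i => r (n₃ - i)) g n₁ (n₃ - j₀) _ hp
    (by
      intro i j hij hj
      exact hr.reverse M i j hij (by omega)) hg
    (by simpa using e3) (by (try simp only); rw [g0]; congr 1; omega) g1
    (by intro i hi; rw [g1]; exact hmin _ (by omega))).1 i hi
  have E2 := (ell_shape M R (fun i => q (n₂ - i)) r g n₂ j₀ _ (hq.reverse M)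
    (by
      intro i j hij hj
      exact hr i j hij (by omega)) hg
    (by simpa using e2.symm) (by rw [g0]) (by (try simp only); rw [g1, e1]; congr 1; omega)
    (by intro i hi; rw [g1]; exact hmin _ (by omega))).2
  generalize 2000 * K + 100 = D at *
  rcases E1 with ⟨j, hj, hd⟩ | ⟨j, hj, hd⟩
  · right
    exact ⟨_, by omega, hd.trans (by omega)⟩
  · left
    obtain ⟨k, hk, hd'⟩ := E2 j hj
    refine ⟨n₂ - k, by omega, ?_⟩
    have := M.tri (p i) (g j) (q (n₂ - k))
    try simp only at hd'
    omega

/-! ### Word metric -/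

lemma wnorm_one : wnorm (1 : FreeGroup ι) = 0 := by
  classical
  unfold wnorm; exact FreeGroup.norm_one

lemma wnorm_inv (w : FreeGroup ι) : wnorm w⁻¹ = wnorm w := by
  unfold wnorm; exact @FreeGroup.norm_inv_eq ι (Classical.decEq ι) w

lemma wnorm_mul_le (w w' : FreeGroup ι) : wnorm (w * w') ≤ wnorm w + wnorm w' := by
  unfold wnorm; exact @FreeGroup.norm_mul_le ι (Classical.decEq ι) w w'

lemma wnorm_mk_le (L : List (ι × Bool)) : wnorm (FreeGroup.mk L) ≤ L.length := by
  unfold wnorm; exact @FreeGroup.norm_mk_le ι L (Classical.decEq ι)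

lemma exists_list (w : FreeGroup ι) : ∃ L : List (ι × Bool), FreeGroup.mk L = w ∧
    L.length = wnorm w :=
  ⟨@FreeGroup.toWord ι (Classical.decEq ι) w, @FreeGroup.mk_toWord ι (Classical.decEq ι) w, rfl⟩

lemma exists_rep (φ : FreeGroup ι →* G) (hφ : Surjective φ) (g : G) :
    ∃ w, wnorm w = wlen φ g ∧ φ w = g := by
  have : (wlen φ g) ∈ {n | ∃ w : FreeGroup ι, wnorm w = n ∧ φ w = g} := by
    apply Nat.sInf_mem
    obtain ⟨w, hw⟩ := hφ g
    exact ⟨_, w, rfl, hw⟩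
  exact this

lemma wlen_le (φ : FreeGroup ι →* G) (w : FreeGroup ι) : wlen φ (φ w) ≤ wnorm w :=
  Nat.sInf_le ⟨w, rfl, rfl⟩

lemma isGeo_of_path {V : Type*} {d : V → V → ℕ} (h0 : ∀ x, d x x = 0)
    (ht : ∀ x y z, d x z ≤ d x y + d y z) {p : ℕ → V} {n : ℕ}
    (hp : ∀ i < n, d (p i) (p (i + 1)) ≤ 1) (hn : n ≤ d (p 0) (p n)) : IsGeo d p n := by
  have hle : ∀ i j, i ≤ j → j ≤ n → d (p i) (p j) + i ≤ j := by
    intro i j hij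
    induction j, hij using Nat.le_induction with
    | base => intro _; rw [h0]; omega
    | succ j hij ih =>
      intro hj
      have a := ih (by omega)
      have b := hp j (by omega)
      have := ht (p i) (p j) (p (j + 1))
      omega
  intro i j hij hj
  have a := hle 0 i (by omega) (by omega)
  have b := hle i j hij hj
  have c := hle j n hj le_rfl
  have t1 := ht (p 0) (p i) (p n)
  have t2 := ht (p i) (p j) (p n)
  omega

lemma geoMet (φ : FreeGroup ι →* G) (hφ : Surjective φ) : GeoMet (wdist φ) := by
  have h0 : ∀ x, wdist φ x x = 0 := by
    intro x
    have := wlen_le φ 1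
    rw [map_one, wnorm_one] at this
    unfold wdist
    rw [inv_mul_cancel]
    omega
  have ht : ∀ x y z, wdist φ x z ≤ wdist φ x y + wdist φ y z := by
    intro x y z
    obtain ⟨w, hw, hw'⟩ := exists_rep φ hφ (x⁻¹ * y)
    obtain ⟨v, hv, hv'⟩ := exists_rep φ hφ (y⁻¹ * z)
    have := wlen_le φ (w * v)
    have h2 := wnorm_mul_le w v
    rw [map_mul, hw', hv', show x⁻¹ * y * (y⁻¹ * z) = x⁻¹ * z by group] at this
    unfold wdist
    omega
  have hs : ∀ x y, wdist φ y x ≤ wdist φ x y := by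
    intro x y
    obtain ⟨w, hw, hw'⟩ := exists_rep φ hφ (x⁻¹ * y)
    have := wlen_le φ w⁻¹
    rw [map_inv, hw', wnorm_inv, show (x⁻¹ * y)⁻¹ = y⁻¹ * x by group] at this
    unfold wdist
    omega
  refine ⟨h0, fun x y => le_antisymm (hs _ _) (hs _ _), ht, ?_⟩
  intro x y
  obtain ⟨w, hw, hw'⟩ := exists_rep φ hφ (x⁻¹ * y)
  obtain ⟨L, hL, hL'⟩ := exists_list w
  have hlen : L.length = wdist φ x y := by rw [hL', hw]; rfl
  have e0 : x * φ (FreeGroup.mk (L.take 0)) = x := by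
    rw [List.take_zero, ← FreeGroup.one_eq_mk, map_one, mul_one]
  have e1 : x * φ (FreeGroup.mk (L.take (wdist φ x y))) = y := by
    rw [← hlen, List.take_length, hL, hw']; group
  refine ⟨fun i => x * φ (FreeGroup.mk (L.take i)), e0, e1, ?_⟩
  apply isGeo_of_path h0 ht
  · intro i hi
    have e : L.take (i + 1) = L.take i ++ [L[i]'(by omega)] := by
      rw [List.take_append_getElem]
    unfold wdist
    rw [e, ← FreeGroup.mul_mk, map_mul]
    rw [show ∀ a b : G, (x * a)⁻¹ * (x * (a * b)) = b by intro a b; group]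
    exact (wlen_le _ _).trans (wnorm_mk_le _)
  · rw [e0, e1]

/-! ### Discrete one-forms -/

/-- The (doubled) one-form `u dv`. -/
def om (u v : G → ℤ) (g h : G) : ℤ := (u g + u h) * (v h - v g)

/-- One step of parallel transport. -/
def stepPerm (u v : G → ℤ) (x : G) : Equiv.Perm (G × ℤ) where
  toFun q := (q.1 * x⁻¹, q.2 + om u v q.1 (q.1 * x⁻¹))
  invFun q := (q.1 * x, q.2 + om u v q.1 (q.1 * x))
  left_inv q := by
    ext
    · simp
    · simp [om]; ring
  right_inv q := by
    ext
    · simp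
    · simp [om]; ring

/-- Parallel transport as a homomorphism. -/
def Jhom (φ : FreeGroup ι →* G) (u v : G → ℤ) : FreeGroup ι →* Equiv.Perm (G × ℤ) :=
  FreeGroup.lift (fun i => stepPerm u v (φ (FreeGroup.of i)))

/-- Integral of the one-form along a word. -/
def J (φ : FreeGroup ι →* G) (u v : G → ℤ) (w : FreeGroup ι) (g : G) : ℤ :=
  (Jhom φ u v w (g, 0)).2

lemma Jhom_apply (φ : FreeGroup ι →* G) (u v : G → ℤ) (w : FreeGroup ι) :
    ∀ g s, Jhom φ u v w (g, s) = (g * (φ w)⁻¹, s + J φ u v w g) := by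
  induction w using FreeGroup.induction_on with
  | C1 => intro g s; simp [J]
  | of i => intro g s; simp [J, Jhom, stepPerm]
  | inv_of i h =>
    intro g s
    simp [J, Jhom, stepPerm, Equiv.Perm.inv_def, Equiv.symm]
  | mul x y hx hy =>
    intro g s
    have e : ∀ t, Jhom φ u v (x * y) (g, t) =
        (g * (φ y)⁻¹ * (φ x)⁻¹, t + J φ u v y g + J φ u v x (g * (φ y)⁻¹)) := by
      intro t
      rw [map_mul, Equiv.Perm.mul_apply, hy, hx]
    rw [J, e, e, map_mul]
    ext
    · simp [mul_assoc]
    · simp [add_assoc]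

lemma J_mul (φ : FreeGroup ι →* G) (u v : G → ℤ) (x y : FreeGroup ι) (g : G) :
    J φ u v (x * y) g = J φ u v y g + J φ u v x (g * (φ y)⁻¹) := by
  rw [J, map_mul, Equiv.Perm.mul_apply, Jhom_apply φ u v y, Jhom_apply φ u v x]
  simp

lemma J_one (φ : FreeGroup ι →* G) (u v : G → ℤ) (g : G) : J φ u v 1 g = 0 := by
  simp [J]

lemma J_letter (φ : FreeGroup ι →* G) (u v : G → ℤ) (x : ι × Bool) (g : G) :
    J φ u v (FreeGroup.mk [x]) g = om u v g (g * (φ (FreeGroup.mk [x]))⁻¹) := by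
  obtain ⟨i, b⟩ := x
  cases b
  · have e : FreeGroup.mk [(i, false)] = (FreeGroup.of i)⁻¹ := rfl
    rw [e]
    simp [J, Jhom, stepPerm, Equiv.Perm.inv_def, Equiv.symm]
  · have e : FreeGroup.mk [(i, true)] = FreeGroup.of i := rfl
    rw [e]
    simp [J, Jhom, stepPerm]

lemma J_small (φ : FreeGroup ι →* G) (u v : G → ℤ) (y : FreeGroup ι) (hy : wnorm y ≤ 1) (g : G) :
    J φ u v y g = om u v g (g * (φ y)⁻¹) := by
  obtain ⟨L, rfl, hL⟩ := exists_list y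
  match L, hL with
  | [], _ => rw [← FreeGroup.one_eq_mk, J_one]; simp [om]
  | [x], _ => exact J_letter φ u v x g
  | x :: z :: L, hL => simp at hL; omega

lemma J_bound_list (φ : FreeGroup ι →* G) (u v : G → ℤ)
    (hu : ∀ x y, |u x - u y| ≤ wdist φ x y) (hv : ∀ x y, |v x - v y| ≤ wdist φ x y)
    (L : List (ι × Bool)) (g : G) :
    |J φ u v (FreeGroup.mk L) g - 2 * u g * (v (g * (φ (FreeGroup.mk L))⁻¹) - v g)| ≤
      (L.length : ℤ) ^ 2 := by
  induction L with
  | nil => rw [← FreeGroup.one_eq_mk, J_one]; simp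
  | cons x L ih =>
    have e : FreeGroup.mk (x :: L) = FreeGroup.mk [x] * FreeGroup.mk L := by
      rw [FreeGroup.mul_mk]; rfl
    have dist_le : ∀ (L : List (ι × Bool)) (h : G),
        (wdist φ h (h * (φ (FreeGroup.mk L))⁻¹) : ℤ) ≤ L.length := by
      intro L h
      have := wlen_le φ (FreeGroup.mk L)⁻¹
      rw [wnorm_inv, map_inv] at this
      have h2 := wnorm_mk_le L
      unfold wdist
      rw [inv_mul_cancel_left]
      omega
    rw [e, J_mul, J_letter, map_mul, mul_inv_rev, ← mul_assoc]
    set h := g * (φ (FreeGroup.mk L))⁻¹ with hh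
    set h' := h * (φ (FreeGroup.mk [x]))⁻¹ with hh'
    have d1 : |u g - u h| ≤ L.length := (hu g h).trans (dist_le L g)
    have d2 : |u h - u h'| ≤ 1 := (hu h h').trans (by simpa using dist_le [x] h)
    have d3 : |v h - v h'| ≤ 1 := (hv h h').trans (by simpa using dist_le [x] h)
    have e2 : J φ u v (FreeGroup.mk L) g + om u v h h' - 2 * u g * (v h' - v g) =
      (J φ u v (FreeGroup.mk L) g - 2 * u g * (v h - v g)) +
        (2 * (u g - u h) + (u h - u h')) * (v h - v h') := by
      unfold om; ring
    rw [e2]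
    refine (abs_add_le _ _).trans ?_
    have e3 : |(2 * (u g - u h) + (u h - u h')) * (v h - v h')| ≤ 2 * L.length + 1 := by
      rw [abs_mul]
      have : |2 * (u g - u h) + (u h - u h')| ≤ 2 * L.length + 1 := by
        rw [abs_le] at *
        constructor <;> linarith [d1.1, d1.2, d2.1, d2.2]
      calc _ ≤ (2 * (L.length : ℤ) + 1) * 1 := by gcongr
        _ = _ := by ring
    push_cast [List.length_cons]
    nlinarith

lemma J_area (φ : FreeGroup ι →* G) (u v : G → ℤ)
    (hu : ∀ x y, |u x - u y| ≤ wdist φ x y) (hv : ∀ x y, |v x - v y| ≤ wdist φ x y)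
    (ρ : ℕ) (w : FreeGroup ι) (l : ℕ) (h : AreaLe (triv φ ρ) w l) (g : G) :
    |J φ u v w g| ≤ (l : ℤ) * (ρ : ℤ) ^ 2 := by
  obtain ⟨P, rfl, hP, rfl⟩ := h
  induction P generalizing g with
  | nil => simp [J_one]
  | cons p P ih =>
    rw [List.map_cons, List.prod_cons, J_mul]
    refine (abs_add_le _ _).trans ?_
    have h1 := ih g (fun q hq => hP q (List.mem_cons_of_mem _ hq))
    generalize g * (φ (List.map (fun p => p.1⁻¹ * p.2 * p.1) P).prod)⁻¹ = g' 
    have hp : wnorm p.2 ≤ ρ ∧ φ p.2 = 1 := by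
      rcases hP p List.mem_cons_self with h | h
      · exact h
      · obtain ⟨a, b⟩ := h
        rw [wnorm_inv] at a
        rw [map_inv, inv_eq_one] at b
        exact ⟨a, b⟩
    have h2 : |J φ u v (p.1⁻¹ * p.2 * p.1) g'| ≤ (ρ : ℤ) ^ 2 := by
      have hz := J_mul φ u v p.1⁻¹ p.1 g'
      rw [inv_mul_cancel, J_one] at hz
      rw [J_mul, J_mul, hp.2, inv_one, mul_one]
      obtain ⟨L, hL, hL'⟩ := exists_list p.2
      have hb := J_bound_list φ u v hu hv L (g' * (φ p.1)⁻¹)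
      rw [hL, hp.2, inv_one, mul_one, sub_self, mul_zero, sub_zero, hL'] at hb
      have : J φ u v p.1 g' + (J φ u v p.2 (g' * (φ p.1)⁻¹) +
        J φ u v p.1⁻¹ (g' * (φ p.1)⁻¹)) = J φ u v p.2 (g' * (φ p.1)⁻¹) := by linarith
      rw [this]
      refine hb.trans ?_
      have : (wnorm p.2 : ℤ) ≤ ρ := by exact_mod_cast hp.1
      gcongr
    push_cast [List.length_cons]
    nlinarith

lemma exists_lip {V : Type*} {d : V → V → ℕ} (M : GeoMet d) (p q : ℕ → V) (m n D : ℕ)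
    (h : ∀ i ≤ m, ∀ j ≤ n, D ≤ d (p i) (q j)) :
    ∃ u : V → ℤ, (∀ x y, |u x - u y| ≤ d x y) ∧ (∀ i ≤ m, u (p i) = 0) ∧
      (∀ j ≤ n, u (q j) = D) := by
  classical
  have hmin : ∀ x, ∃ k, (∀ i ≤ m, k ≤ d x (p i)) ∧ ∃ i ≤ m, k = d x (p i) := by
    intro x
    obtain ⟨j, hj, h⟩ := Finset.exists_min_image (Finset.range (m + 1))
      (fun j => d x (p j)) ⟨0, by simp⟩
    refine ⟨d x (p j), fun i hi => h i (by simp; omega), j, ?_, rfl⟩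
    simpa [Nat.lt_succ_iff] using hj
  choose f hf1 hf2 using hmin
  have hlip : ∀ x y, f x ≤ f y + d x y := by
    intro x y
    obtain ⟨i, hi, e⟩ := hf2 y
    have := hf1 x i hi
    have := M.tri x y (p i)
    omega
  refine ⟨fun x => ((min D (f x) : ℕ) : ℤ), ?_, ?_, ?_⟩
  · intro x y
    have a := hlip x y
    have b := hlip y x
    rw [M.symm y x] at b
    rw [abs_le]
    constructor <;> simp only <;> omega
  · intro i hi
    have := hf1 (p i) i hi
    rw [M.refl] at this
    simp; omega
  · intro j hj
    obtain ⟨i, hi, e⟩ := hf2 (q j)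
    have := h i hi j hj
    rw [M.symm] at this
    have : D ≤ f (q j) := by omega
    simp [this]

lemma path_word (φ : FreeGroup ι →* G) (hφ : Surjective φ) (u v : G → ℤ) (p : ℕ → G) (n : ℕ)
    (hp : IsPath (wdist φ) p n) : ∃ w, wnorm w ≤ n ∧ p n = p 0 * (φ w)⁻¹ ∧
      J φ u v w (p 0) = ∑ i ∈ Finset.range n, om u v (p i) (p (i + 1)) := by
  induction n with
  | zero => exact ⟨1, by rw [wnorm_one], by simp, by simp [J_one]⟩
  | succ n ih =>
    obtain ⟨w, h1, h2, h3⟩ := ih (fun i hi => hp i (by omega))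
    obtain ⟨y, hy, hy'⟩ := exists_rep φ hφ ((p n)⁻¹ * p (n + 1))
    have hy1 : wnorm y⁻¹ ≤ 1 := by
      rw [wnorm_inv, hy]
      exact hp n (by omega)
    refine ⟨y⁻¹ * w, ?_, ?_, ?_⟩
    · have := wnorm_mul_le y⁻¹ w; omega
    · rw [map_mul, mul_inv_rev, ← mul_assoc, ← h2, map_inv, inv_inv, hy']; group
    · rw [J_mul, J_small φ u v _ hy1, h3, ← h2, Finset.sum_range_succ, map_inv, inv_inv, hy']
      simp

lemma rect_of_area (φ : FreeGroup ι →* G) (hφ : Surjective φ) (ρ K : ℕ)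
    (hA : ∀ w, φ w = 1 → ∃ l, AreaLe (triv φ ρ) w l ∧ l ≤ K * wnorm w + K) :
    Rect (wdist φ) (K * ρ ^ 2) := by
  intro p₁ p₂ p₃ p₄ n₁ n₂ n₃ n₄ D₁ D₂ hp₁ hp₂ hp₃ hp₄ e1 e2 e3 e4 hD₁ hD₂
  have M := geoMet φ hφ
  obtain ⟨u, hu, u1, u3⟩ := exists_lip M p₁ p₃ n₁ n₃ D₁ hD₁
  obtain ⟨v, hv, v2, v4⟩ := exists_lip M p₂ p₄ n₂ n₄ D₂ hD₂
  obtain ⟨w₁, a1, b1, c1⟩ := path_word φ hφ u v p₁ n₁ hp₁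
  obtain ⟨w₂, a2, b2, c2⟩ := path_word φ hφ u v p₂ n₂ hp₂
  obtain ⟨w₃, a3, b3, c3⟩ := path_word φ hφ u v p₃ n₃ hp₃
  obtain ⟨w₄, a4, b4, c4⟩ := path_word φ hφ u v p₄ n₄ hp₄
  have s1 : J φ u v w₁ (p₁ 0) = 0 := by
    rw [c1]
    apply Finset.sum_eq_zero
    intro i hi
    rw [Finset.mem_range] at hi
    simp [om, u1 i (by omega), u1 (i + 1) (by omega)]
  have s2 : J φ u v w₂ (p₂ 0) = 0 := by
    rw [c2]
    apply Finset.sum_eq_zero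
    intro i hi
    rw [Finset.mem_range] at hi
    simp [om, v2 i (by omega), v2 (i + 1) (by omega)]
  have s4 : J φ u v w₄ (p₄ 0) = 0 := by
    rw [c4]
    apply Finset.sum_eq_zero
    intro i hi
    rw [Finset.mem_range] at hi
    simp [om, v4 i (by omega), v4 (i + 1) (by omega)]
  have s3 : J φ u v w₃ (p₃ 0) = 2 * D₁ * D₂ := by
    rw [c3]
    have : ∑ i ∈ Finset.range n₃, om u v (p₃ i) (p₃ (i + 1)) =
        ∑ i ∈ Finset.range n₃, (2 * D₁ * v (p₃ (i + 1)) - 2 * D₁ * v (p₃ i)) := by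
      apply Finset.sum_congr rfl
      intro i hi
      rw [Finset.mem_range] at hi
      unfold om
      rw [u3 i (by omega), u3 (i + 1) (by omega)]; ring
    rw [this, Finset.sum_range_sub (fun i => 2 * (D₁ : ℤ) * v (p₃ i)), e3, ← e2,
      v4 0 (by omega), v2 n₂ le_rfl]
    ring
  have hJ : J φ u v (w₄ * (w₃ * (w₂ * w₁))) (p₁ 0) = 2 * D₁ * D₂ := by
    rw [J_mul, J_mul, J_mul]
    simp only [map_mul, mul_inv_rev, ← mul_assoc]
    rw [← b1, e1, ← b2, e2, ← b3, e3, s1, s2, s3, s4]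
    ring
  have hφ1 : φ (w₄ * (w₃ * (w₂ * w₁))) = 1 := by
    rw [← inv_eq_one]
    have : p₁ 0 * (φ (w₄ * (w₃ * (w₂ * w₁))))⁻¹ = p₁ 0 := by
      simp only [map_mul, mul_inv_rev, ← mul_assoc]
      rw [← b1, e1, ← b2, e2, ← b3, e3, ← b4, e4]
    simpa using this
  have hnorm : wnorm (w₄ * (w₃ * (w₂ * w₁))) ≤ n₁ + n₂ + n₃ + n₄ := by
    have := wnorm_mul_le w₄ (w₃ * (w₂ * w₁))
    have := wnorm_mul_le w₃ (w₂ * w₁)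
    have := wnorm_mul_le w₂ w₁
    omega
  obtain ⟨l, hl, hl'⟩ := hA _ hφ1
  have hb := J_area φ u v hu hv ρ _ l hl (p₁ 0)
  rw [hJ, abs_of_nonneg (by positivity)] at hb
  have hb' : 2 * D₁ * D₂ ≤ l * ρ ^ 2 := by exact_mod_cast hb
  have : l * ρ ^ 2 ≤ (K * (n₁ + n₂ + n₃ + n₄) + K) * ρ ^ 2 := by
    gcongr
    refine hl'.trans ?_
    gcongr
  nlinarith

/-! ### Translation of thinness -/

lemma isHyperbolic_of_thin (φ : FreeGroup ι →* G) (hφ : Surjective φ) (δ : ℕ)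
    (T : Thin (wdist φ) δ) : IsHyperbolic φ := by
  have M := geoMet φ hφ
  have main : ∀ (n₁ n₂ n₃ : ℕ) (p : Fin (n₁ + 1) → G) (q : Fin (n₂ + 1) → G)
      (r : Fin (n₃ + 1) → G),
      IsGeodesic φ p → IsGeodesic φ q → IsGeodesic φ r →
      p (Fin.last n₁) = q 0 → q (Fin.last n₂) = r 0 → r (Fin.last n₃) = p 0 →
      ThinAt φ δ p (Set.range q ∪ Set.range r) := by
    intro n₁ n₂ n₃ p q r hp hq hr e1 e2 e3
    have conv : ∀ (n : ℕ) (p : Fin (n + 1) → G), IsGeodesic φ p →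
        IsGeo (wdist φ) (fun i => p (Fin.ofNat (n + 1) i)) n := by
      intro n p hp
      apply isGeo_of_path M.refl M.tri
      · intro i hi
        have := hp.1 ⟨i, hi⟩
        convert this using 3
        · ext; simp [Nat.mod_eq_of_lt (show i < n + 1 by omega)]
        · ext; simp [Nat.mod_eq_of_lt (show i + 1 < n + 1 by omega)]
      · have := hp.2
        have e : Fin.ofNat (n + 1) n = Fin.last n := by ext; simp
        have e' : Fin.ofNat (n + 1) 0 = 0 := rfl
        simp only [e, e', this, le_refl]
    have el : ∀ n, Fin.ofNat (n + 1) n = Fin.last n := by intro n; ext; simp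
    have e0 : ∀ n, Fin.ofNat (n + 1) 0 = 0 := fun n => rfl
    intro i
    have hT := T _ _ _ n₁ n₂ n₃ (conv _ p hp) (conv _ q hq) (conv _ r hr)
      (by simp only [el, e0, e1]) (by simp only [el, e0, e2]) (by simp only [el, e0, e3])
      i (by omega)
    have ei : Fin.ofNat (n₁ + 1) (i : ℕ) = i := by
      ext; simp
    simp only [ei] at hT
    rcases hT with ⟨j, hj, hd⟩ | ⟨j, hj, hd⟩
    · exact ⟨_, Or.inl ⟨_, rfl⟩, by exact_mod_cast hd⟩
    · exact ⟨_, Or.inr ⟨_, rfl⟩, by exact_mod_cast hd⟩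
  refine ⟨δ, by positivity, ?_⟩
  intro n₁ n₂ n₃ p q r hp hq hr e1 e2 e3
  exact ⟨main _ _ _ p q r hp hq hr e1 e2 e3, main _ _ _ q r p hq hr hp e2 e3 e1,
    main _ _ _ r p q hr hp hq e3 e1 e2⟩

lemma thin_of_isHyperbolic (φ : FreeGroup ι →* G) (h : IsHyperbolic φ) :
    ∃ δ : ℕ, Thin (wdist φ) δ := by
  obtain ⟨δ, h0, h⟩ := h
  refine ⟨⌊δ⌋₊, ?_⟩
  intro p q r n₁ n₂ n₃ hp hq hr e1 e2 e3 i hi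
  have conv : ∀ (p : ℕ → G) (n : ℕ), IsGeo (wdist φ) p n →
      IsGeodesic φ (fun i : Fin (n + 1) => p i) := by
    intro p n hp
    constructor
    · intro i
      have := hp i (i + 1) (by omega) (by omega)
      simp only [Fin.val_castSucc, Fin.val_succ]
      omega
    · have := hp 0 n (by omega) le_rfl
      simpa using this
  obtain ⟨a, ha, hd⟩ := (h n₁ n₂ n₃ _ _ _ (conv p n₁ hp) (conv q n₂ hq) (conv r n₃ hr)
    (by simpa using e1) (by simpa using e2) (by simpa using e3)).1 ⟨i, by omega⟩
  have hd := Nat.le_floor hd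
  rcases ha with ⟨j, rfl⟩ | ⟨j, rfl⟩
  · exact Or.inl ⟨j, by omega, hd⟩
  · exact Or.inr ⟨j, by omega, hd⟩

/-! ### Area bookkeeping -/

lemma AreaLe.one (R : Set (FreeGroup ι)) : AreaLe R 1 0 := ⟨[], rfl, by simp, by simp⟩

lemma AreaLe.mul {R : Set (FreeGroup ι)} {w w' : FreeGroup ι} {l l' : ℕ}
    (h : AreaLe R w l) (h' : AreaLe R w' l') : AreaLe R (w * w') (l + l') := by
  obtain ⟨L, rfl, hL, rfl⟩ := h
  obtain ⟨L', rfl, hL', rfl⟩ := h'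
  refine ⟨L ++ L', by simp, ?_, by simp⟩
  intro p hp
  rcases List.mem_append.1 hp with h | h
  · exact hL p h
  · exact hL' p h

lemma AreaLe.single {R : Set (FreeGroup ι)} {r : FreeGroup ι} (h : r ∈ R ∨ r⁻¹ ∈ R)
    (f : FreeGroup ι) : AreaLe R (f⁻¹ * r * f) 1 :=
  ⟨[(f, r)], rfl, by simpa using h, by simp⟩

lemma AreaLe.inv {R : Set (FreeGroup ι)} {w : FreeGroup ι} {l : ℕ}
    (h : AreaLe R w l) : AreaLe R w⁻¹ l := by
  obtain ⟨L, rfl, hL, rfl⟩ := h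
  induction L with
  | nil => simpa using AreaLe.one R
  | cons p L ih =>
    have h1 := ih (fun q hq => hL q (List.mem_cons_of_mem _ hq))
    have h2 : AreaLe R (p.1⁻¹ * p.2⁻¹ * p.1) 1 := by
      apply AreaLe.single
      rw [inv_inv]
      exact (hL p List.mem_cons_self).symm
    have := h1.mul h2
    rw [List.map_cons, List.prod_cons, mul_inv_rev]
    have e : (p.1⁻¹ * p.2 * p.1)⁻¹ = p.1⁻¹ * p.2⁻¹ * p.1 := by group
    rw [e]
    exact this

lemma AreaLe.mono {R R' : Set (FreeGroup ι)} (hR : R ⊆ R') {w : FreeGroup ι} {l : ℕ}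
    (h : AreaLe R w l) : AreaLe R' w l := by
  obtain ⟨L, h1, h2, h3⟩ := h
  exact ⟨L, h1, fun p hp => (h2 p hp).imp (fun h => hR h) (fun h => hR h), h3⟩

lemma exists_areaLe (R : Set (FreeGroup ι)) (w : FreeGroup ι)
    (hw : w ∈ Subgroup.normalClosure R) : ∃ l, AreaLe R w l := by
  induction hw using Subgroup.closure_induction with
  | mem x hx =>
    obtain ⟨r, hr, hc⟩ := Group.mem_conjugatesOfSet_iff.1 hx
    obtain ⟨c, rfl⟩ := isConj_iff.1 hc
    refine ⟨1, ?_⟩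
    have := AreaLe.single (R := R) (Or.inl hr) c⁻¹
    rwa [inv_inv] at this
  | one => exact ⟨0, AreaLe.one R⟩
  | mul x y _ _ hx hy =>
    obtain ⟨l, hl⟩ := hx
    obtain ⟨l', hl'⟩ := hy
    exact ⟨_, hl.mul hl'⟩
  | inv x _ hx =>
    obtain ⟨l, hl⟩ := hx
    exact ⟨l, hl.inv⟩

lemma triv_mono (φ : FreeGroup ι →* G) {k m : ℕ} (h : k ≤ m) : triv φ k ⊆ triv φ m :=
  fun _ hw => ⟨hw.1.trans h, hw.2⟩

lemma ker_of_mem (φ : FreeGroup ι →* G) (k : ℕ) (w : FreeGroup ι)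
    (hw : w ∈ Subgroup.normalClosure (triv φ k)) : φ w = 1 := by
  have : Subgroup.normalClosure (triv φ k) ≤ φ.ker :=
    Subgroup.normalClosure_le_normal (fun v hv => hv.2)
  exact this hw

lemma finite_ball [Finite ι] (n : ℕ) : {w : FreeGroup ι | wnorm w ≤ n}.Finite := by
  have h := List.finite_length_le (ι × Bool) n
  refine (h.image FreeGroup.mk).subset ?_
  intro w hw
  obtain ⟨L, hL, hL'⟩ := exists_list w
  exact ⟨L, by rw [Set.mem_ofPred_eq, hL']; exact hw, hL⟩

lemma area_le_isoSpec [Finite ι] (φ : FreeGroup ι →* G) (k m n : ℕ) (w : FreeGroup ι)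
    (hw : w ∈ Subgroup.normalClosure (triv φ k)) (hn : wnorm w ≤ n) :
    area (triv φ m) w ≤ isoSpec φ k m n := by
  apply le_csSup
  · apply Set.Finite.bddAbove
    apply Set.Finite.image
    exact (finite_ball n).subset (fun v hv => hv.2)
  · exact ⟨w, ⟨hw, hn⟩, rfl⟩

lemma isoSpec_le (φ : FreeGroup ι →* G) (k m n B : ℕ)
    (h : ∀ w, φ w = 1 → wnorm w ≤ n → ∃ l ≤ B, AreaLe (triv φ m) w l) :
    isoSpec φ k m n ≤ B := by
  apply csSup_le'
  rintro _ ⟨w, ⟨hw, hn⟩, rfl⟩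
  obtain ⟨l, hl, hA⟩ := h w (ker_of_mem φ k w hw) hn
  exact (Nat.sInf_le hA).trans hl

/-! ### Hyperbolic implies the linear bound -/

lemma dehn_alg (φ : FreeGroup ι →* G) (hφ : Surjective φ) (E : ℕ)
    (F : ∀ x y z w, wdist φ x z + wdist φ y w ≤ wdist φ x y + wdist φ z w + E ∨
      wdist φ x z + wdist φ y w ≤ wdist φ y z + wdist φ x w + E)
    (m : ℕ) (hm : 0 < m) (hE : E ≤ m) :
    ∀ n, ∀ L : List (ι × Bool), L.length = n → φ (FreeGroup.mk L) = 1 →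
      ∃ l, AreaLe (triv φ (12 * m)) (FreeGroup.mk L) l ∧ l * m ≤ n + m := by
  have M := geoMet φ hφ
  intro n
  induction n using Nat.strong_induction_on with
  | _ n IH =>
  intro L hL hφL
  by_cases hsmall : n < 6 * m
  · refine ⟨1, ?_, by omega⟩
    have := AreaLe.single (R := triv φ (12 * m)) (r := FreeGroup.mk L)
      (Or.inl ⟨(wnorm_mk_le L).trans (by omega), hφL⟩) 1
    simpa using this
  obtain ⟨x, hx⟩ : ∃ x : ℕ → G, ∀ i, x i = φ (FreeGroup.mk (L.take i)) := ⟨_, fun _ => rfl⟩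
  have hdx : ∀ i j, i ≤ j → (x i)⁻¹ * x j = φ (FreeGroup.mk ((L.take j).drop i)) := by
    intro i j hij
    have : L.take j = L.take i ++ (L.take j).drop i := by
      conv_lhs => rw [← List.take_append_drop i (L.take j), List.take_take, min_eq_left hij]
    rw [hx, hx]
    conv_lhs => rw [this]
    rw [← FreeGroup.mul_mk, map_mul, inv_mul_cancel_left]
  have hdle : ∀ i j, i ≤ j → j ≤ n → wdist φ (x i) (x j) + i ≤ j := by
    intro i j hij hj
    unfold wdist
    rw [hdx i j hij]
    have h1 := (wlen_le φ (FreeGroup.mk ((L.take j).drop i))).trans (wnorm_mk_le _)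
    rw [List.length_drop, List.length_take] at h1
    omega
  have hshort : ∃ i j, i ≤ j ∧ j ≤ n ∧ j ≤ i + 6 * m ∧ wdist φ (x i) (x j) + m + i < j := by
    by_contra hcon
    push Not at hcon
    have hdiv : n = 3 * m * (n / (3 * m)) + n % (3 * m) := (Nat.div_add_mod n (3 * m)).symm
    have hmod : n % (3 * m) < 3 * m := Nat.mod_lt _ (by omega)
    have hN2 : 2 ≤ n / (3 * m) := by
      rw [Nat.le_div_iff_mul_le (by omega)]; omega
    generalize n / (3 * m) = N at hdiv hN2
    generalize n % (3 * m) = r at hdiv hmod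
    have hbd : ∀ i, i ≤ N → 3 * m * i ≤ n := by
      intro i hi
      have := Nat.mul_le_mul_left (3 * m) hi
      omega
    have hgrow := chain_growth M F (fun i => x (3 * m * i)) N m hm hE
      (by
        intro i hi
        have e : 3 * m * (i + 1) = 3 * m * i + 3 * m := by ring
        have h1 := hdle (3 * m * i) (3 * m * (i + 1)) (by omega) (hbd _ (by omega))
        omega)
      (by
        intro i hi
        have e : 3 * m * (i + 1) = 3 * m * i + 3 * m := by ring
        have h1 := hcon (3 * m * i) (3 * m * (i + 1)) (by omega) (hbd _ (by omega)) (by omega)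
        omega)
      (by
        intro i hi
        have e : 3 * m * (i + 2) = 3 * m * i + 6 * m := by ring
        have h1 := hcon (3 * m * i) (3 * m * (i + 2)) (by omega) (hbd _ (by omega)) (by omega)
        omega)
    have h2 : 5 * m ≤ wdist φ (x (3 * m * 0)) (x (3 * m * 2)) := by
      have e : 3 * m * 2 = 6 * m := by ring
      have h1 := hcon (3 * m * 0) (3 * m * 2) (by omega) (hbd _ (by omega)) (by omega)
      omega
    have h3 : ∀ i, 2 ≤ i → i ≤ N → 5 * m ≤ wdist φ (x (3 * m * 0)) (x (3 * m * i)) := by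
      intro i hi
      induction i, hi using Nat.le_induction with
      | base => intro _; exact h2
      | succ i hi ih =>
        intro h
        have := ih (by omega)
        have := hgrow i (by omega)
        omega
    have h4 := h3 N hN2 le_rfl
    have h5 := hdle (3 * m * N) n (hbd N le_rfl) le_rfl
    have e0 : x (3 * m * 0) = 1 := by
      rw [hx, Nat.mul_zero, List.take_zero, ← FreeGroup.one_eq_mk, map_one]
    have e1 : x n = 1 := by
      rw [hx, ← hL, List.take_length, hφL]
    rw [e0, ← e1, M.symm] at h4
    omega
  obtain ⟨i, j, hij, hjn, hj6, hd⟩ := hshort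
  obtain ⟨v', hv1, hv2⟩ := exists_rep φ hφ ((x i)⁻¹ * x j)
  obtain ⟨V, hV1, hV2⟩ := exists_list v'
  have hVlen : V.length = wdist φ (x i) (x j) := by rw [hV2, hv1]; rfl
  have hsplit : L = L.take i ++ (L.take j).drop i ++ L.drop j := by
    conv_lhs => rw [← List.take_append_drop j L, ← List.take_append_drop i (L.take j),
      List.take_take, min_eq_left hij]
  have hvv : φ (FreeGroup.mk V) = φ (FreeGroup.mk ((L.take j).drop i)) := by
    rw [hV1, hv2, hdx i j hij]
  have hlen' : (L.take i ++ V ++ L.drop j).length + m ≤ n := by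
    simp only [List.length_append, List.length_take, List.length_drop]
    omega
  obtain ⟨l, hl, hl'⟩ := IH _ (by omega) (L.take i ++ V ++ L.drop j) rfl (by
    rw [← FreeGroup.mul_mk, ← FreeGroup.mul_mk, map_mul, map_mul, hvv, ← map_mul, ← map_mul,
      FreeGroup.mul_mk, FreeGroup.mul_mk, ← hsplit, hφL])
  refine ⟨1 + l, ?_, by rw [Nat.add_mul]; omega⟩
  have hrel : FreeGroup.mk ((L.take j).drop i) * (FreeGroup.mk V)⁻¹ ∈ triv φ (12 * m) := by
    constructor
    · have h1 := wnorm_mul_le (FreeGroup.mk ((L.take j).drop i)) (FreeGroup.mk V)⁻¹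
      rw [wnorm_inv] at h1
      have h2 := wnorm_mk_le V
      have h3 := wnorm_mk_le ((L.take j).drop i)
      rw [List.length_drop, List.length_take] at h3
      omega
    · rw [map_mul, map_inv, hvv, mul_inv_cancel]
  have := (AreaLe.single (Or.inl hrel) (FreeGroup.mk (L.take i))⁻¹).mul hl
  convert this using 1
  conv_lhs => rw [hsplit]
  rw [← FreeGroup.mul_mk, ← FreeGroup.mul_mk, ← FreeGroup.mul_mk, ← FreeGroup.mul_mk]
  group

lemma spec_of_hyp (φ : FreeGroup ι →* G) (hφ : Surjective φ) (h : IsHyperbolic φ) :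
    SpecLE (isoSpecR φ) (fun _ m n => (((fun _ => 0 : ℕ → ℕ) n : ℕ) : ℝ) / m) := by
  obtain ⟨δ, T⟩ := thin_of_isHyperbolic φ h
  have M := geoMet φ hφ
  refine ⟨12 + (6 * δ + 2), by omega, ?_⟩
  intro k m n hk hm hn hkm
  have hE : 12 + (6 * δ + 2) ≤ m := le_trans (Nat.le_mul_of_pos_right _ hk) hkm
  have key : isoSpec φ k ((12 + (6 * δ + 2)) * m) n ≤ n / m + 1 := by
    apply isoSpec_le
    intro w hw hwn
    obtain ⟨L, rfl, hL⟩ := exists_list w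
    obtain ⟨l, hl, hl'⟩ := dehn_alg φ hφ (6 * δ + 2)
      (fun x y z w => by have := four_point M T x y z w; omega) m hm (by omega) _ L rfl hw
    refine ⟨l, ?_, hl.mono (triv_mono φ (Nat.mul_le_mul_right _ (by omega)))⟩
    rw [← Nat.add_div_right n hm, Nat.le_div_iff_mul_le hm]
    omega
  have key' : (isoSpec φ k ((12 + (6 * δ + 2)) * m) n : ℝ) ≤ (n : ℝ) / m + 1 := by
    have h1 : ((n / m : ℕ) : ℝ) ≤ (n : ℝ) / m := Nat.cast_div_le
    have h2 : (isoSpec φ k ((12 + (6 * δ + 2)) * m) n : ℝ) ≤ ((n / m + 1 : ℕ) : ℝ) := by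
      exact_mod_cast key
    push_cast at h2
    linarith
  unfold isoSpecR
  have hC : (1 : ℝ) ≤ ((12 + (6 * δ + 2) : ℕ) : ℝ) := by
    exact_mod_cast (by omega : 1 ≤ 12 + (6 * δ + 2))
  generalize ((12 + (6 * δ + 2) : ℕ) : ℝ) = C at hC
  have h0 : (0 : ℝ) ≤ (n : ℝ) / m := by positivity
  have h3 : C * (n : ℝ) / m = C * ((n : ℝ) / m) := by ring
  rw [h3]
  simp only [Nat.cast_zero, zero_div, mul_zero, zero_add]
  nlinarith

/-! ### The linear bound implies hyperbolic -/

lemma hyp_of_spec [Finite ι] (φ : FreeGroup ι →* G) (hφ : Surjective φ)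
    (hFP : ∃ R : Set (FreeGroup ι), R.Finite ∧ φ.ker = Subgroup.normalClosure R)
    (α : ℕ → ℕ) (h1 : SpecLE (isoSpecR φ) (fun _ m n => (α n : ℝ) / m))
    (h2 : SpecLE (fun _ m n => (α n : ℝ) / m) (isoSpecR φ)) : IsHyperbolic φ := by
  obtain ⟨R, hR, hker⟩ := hFP
  obtain ⟨C, hC, h1⟩ := h1
  obtain ⟨B, hB, h2⟩ := h2
  -- `α` is linearly bounded
  have hα : ∀ n, 0 < n → α n ≤ B * (B * n) * (2 * B + 1) := by
    intro n hn
    have h := h2 1 (B * n) n one_pos (by positivity) hn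
      (Nat.mul_le_mul_left _ hn)
    have hf : isoSpec φ (B * 1) (B * n) (B * n) ≤ 1 := by
      apply isoSpec_le
      intro w hw hwn
      refine ⟨1, le_rfl, ?_⟩
      have := AreaLe.single (R := triv φ (B * n)) (r := w) (Or.inl ⟨hwn, hw⟩) 1
      simpa using this
    have hf' : isoSpecR φ (B * 1) (B * n) (B * n) ≤ 1 := by
      unfold isoSpecR; exact_mod_cast hf
    have hB' : (0 : ℝ) < B := by exact_mod_cast hB
    have hn' : (0 : ℝ) < n := by exact_mod_cast hn
    have e1 : (B : ℝ) * n / ((B * n : ℕ) : ℝ) = 1 := by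
      push_cast; field_simp
    simp only at h
    rw [e1, div_le_iff₀ (by positivity)] at h
    have h3 : (α n : ℝ) ≤ (B * 1 + 1 + B) * ((B * (B * n) : ℕ) : ℝ) := by
      refine h.trans ?_
      gcongr
    have h4 : (α n : ℝ) ≤ ((B * (B * n) * (2 * B + 1) : ℕ) : ℝ) := by
      refine h3.trans (le_of_eq ?_)
      push_cast; ring
    exact_mod_cast h4
  -- a bound on the lengths of relators
  obtain ⟨k₀, hk₀, hk⟩ : ∃ k₀, 0 < k₀ ∧ ∀ r ∈ R, wnorm r ≤ k₀ := by
    obtain ⟨b, hb⟩ := (hR.image wnorm).bddAbove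
    exact ⟨b + 1, by omega, fun r hr => (hb ⟨r, hr, rfl⟩).trans (by omega)⟩
  have hkersub : φ.ker ≤ Subgroup.normalClosure (triv φ k₀) := by
    rw [hker]
    apply Subgroup.normalClosure_mono
    intro r hr
    refine ⟨hk r hr, ?_⟩
    have : r ∈ φ.ker := by rw [hker]; exact Subgroup.subset_normalClosure hr
    exact this
  have hm : 0 < C * k₀ := by positivity
  have hlin : ∀ w, φ w = 1 → ∃ l, AreaLe (triv φ (C * (C * k₀))) w l ∧
      l ≤ (C * (B * (B * C) * (2 * B + 1)) + C) * wnorm w +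
        (C * (B * (B * C) * (2 * B + 1)) + C) := by
    intro w hw
    have hwk : w ∈ Subgroup.normalClosure (triv φ k₀) := hkersub hw
    have hsub : triv φ k₀ ⊆ triv φ (C * (C * k₀)) :=
      triv_mono φ (by rw [← mul_assoc]; exact Nat.le_mul_of_pos_left _ (by positivity))
    obtain ⟨l₀, hl₀⟩ := exists_areaLe _ w hwk
    have harea : AreaLe (triv φ (C * (C * k₀))) w (area (triv φ (C * (C * k₀))) w) :=
      Nat.sInf_mem (s := {l | AreaLe (triv φ (C * (C * k₀))) w l}) ⟨l₀, hl₀.mono hsub⟩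
    refine ⟨_, harea, ?_⟩
    by_cases hw0 : wnorm w = 0
    · have : AreaLe (triv φ (C * (C * k₀))) w 1 := by
        have := AreaLe.single (R := triv φ (C * (C * k₀))) (r := w)
          (Or.inl ⟨by omega, hw⟩) 1
        simpa using this
      have h3 : area (triv φ (C * (C * k₀))) w ≤ 1 := Nat.sInf_le this
      rw [hw0]
      omega
    · have hb := area_le_isoSpec φ k₀ (C * (C * k₀)) (wnorm w) w hwk le_rfl
      refine hb.trans ?_
      have hn : 0 < wnorm w := by omega
      generalize wnorm w = n at hn
      have h := h1 k₀ (C * k₀) n hk₀ hm hn le_rfl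
      have hCn := hα (C * n) (by positivity)
      have hm1 : (1 : ℝ) ≤ ((C * k₀ : ℕ) : ℝ) := by exact_mod_cast hm
      have d1 : (α (C * n) : ℝ) / ((C * k₀ : ℕ) : ℝ) ≤ α (C * n) :=
        div_le_self (by positivity) hm1
      have d2 : (C : ℝ) * n / ((C * k₀ : ℕ) : ℝ) ≤ C * n :=
        div_le_self (by positivity) hm1
      have h3 : (isoSpec φ k₀ (C * (C * k₀)) n : ℝ) ≤ C * α (C * n) + C * n + C := by
        refine (show (isoSpec φ k₀ (C * (C * k₀)) n : ℝ) ≤ _ from h).trans ?_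
        gcongr
      have h4 : isoSpec φ k₀ (C * (C * k₀)) n ≤ C * α (C * n) + C * n + C := by
        exact_mod_cast h3
      calc _ ≤ C * α (C * n) + C * n + C := h4
        _ ≤ C * (B * (B * (C * n)) * (2 * B + 1)) + C * n + C := by gcongr
        _ = (C * (B * (B * C) * (2 * B + 1)) + C) * n + C := by ring
        _ ≤ _ := by omega
  exact isHyperbolic_of_thin φ hφ _ (thin_of_rect (geoMet φ hφ) (rect_of_area φ hφ _ _ hlin))

/-- For a finitely presented group `G`, the isoperimetric spectrum is
equivalent to `α(n)/m` for some `α : ℕ → ℕ` iff `G` is hyperbolic. -/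
theorem isoSpec_alpha_div_m_iff_hyperbolic {G : Type} [Group G] {a : ℕ}
    (φ : FreeGroup (Fin a) →* G) (hφ : Surjective φ)
    (hFP : ∃ R : Set (FreeGroup (Fin a)), R.Finite ∧ φ.ker = Subgroup.normalClosure R) :
    (∃ α : ℕ → ℕ, SpecEquiv (isoSpecR φ) (fun _ m n => (α n : ℝ) / m)) ↔
      IsHyperbolic φ := by
  constructor
  · rintro ⟨α, h1, h2⟩
    exact hyp_of_spec φ hφ hFP α h1 h2
  · intro h
    refine ⟨fun _ => 0, spec_of_hyp φ hφ h, 1, one_pos, ?_⟩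
    intro k m n hk hm hn hkm
    have : (0 : ℝ) ≤ isoSpecR φ (1 * k) m (1 * n) := by
      unfold isoSpecR; positivity
    simp only [Nat.cast_zero, zero_div]
    positivity

end IsoSpecPaper
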